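/- arXiv:0802.1450 — 3 statements merged into one kernel-verified Lean document; each statement's English description precedes it below -/
import Mathlib

section
/- Let F be a field, let q, s, t ∈ F with q ≠ 0, and let P(X) = X⁴ + sX³ + tX² + sqX + q² ∈ F[X]. Then the multiplicity of 1 as a root of P equals the multiplicity of q as a root of P. -/
/-!
The roots of `P` pair up under `α ↦ q / α`, which exchanges `1` and `q`. In polynomial form this is
the functional equation `P(qX) = q² · P.reverse`. Substituting `qX` moves the root `q` to `1`, and
reversal preserves the multiplicity of `1`: it is multiplicative, it sends `X - 1` to `-(X - 1)`,
and it is an involution on polynomials with nonzero constant coefficient.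
-/

open Polynomial

theorem reverse_X_sub_one (F : Type*) [Field F] :
    (X - C 1 : F[X]).reverse = -(X - C 1) := by
  rw [reverse, natDegree_X_sub_C, reflect_sub, reflect_C]
  simp [reflect_one_X]

theorem pow_dvd_reverse {F : Type*} [Field F] {p : F[X]} {n : ℕ}
    (h : (X - C 1) ^ n ∣ p) : (X - C 1) ^ n ∣ p.reverse := by
  obtain ⟨r, rfl⟩ := h
  induction n with
  | zero => simp
  | succ n ih =>
    rw [pow_succ', mul_assoc, reverse_mul_of_domain, reverse_X_sub_one]
    exact mul_dvd_mul (dvd_neg.mpr dvd_rfl) ih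

theorem rootMultiplicity_one_le_reverse {F : Type*} [Field F] {p : F[X]} (hp : p ≠ 0) :
    p.rootMultiplicity 1 ≤ p.reverse.rootMultiplicity 1 := by
  rw [le_rootMultiplicity_iff (by simpa using hp)]
  exact pow_dvd_reverse (pow_rootMultiplicity_dvd p 1)

/-- Equality comes from applying `rootMultiplicity_one_le_reverse` twice; the condition on the
constant coefficient makes the double reverse return `p`. -/
theorem rootMultiplicity_one_reverse {F : Type*} [Field F] {p : F[X]} (hp : p.coeff 0 ≠ 0) :
    p.reverse.rootMultiplicity 1 = p.rootMultiplicity 1 := by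
  have hp0 : p ≠ 0 := by
    rintro rfl
    simp at hp
  refine le_antisymm ?_ (rootMultiplicity_one_le_reverse hp0)
  have h := rootMultiplicity_one_le_reverse (p := p.reverse) (by simpa using hp0)
  have hrr : p.reverse.reverse = p := by
    rw [reverse, reverse_natDegree, natTrailingDegree_eq_zero.mpr (Or.inr hp), Nat.sub_zero,
      reverse, reflect_reflect]
  rwa [hrr] at h

/-- For `P(X) = X⁴ + sX³ + tX² + sqX + q²` with `q ≠ 0`, the multiplicity of `1`
as a root of `P` equals the multiplicity of `q` as a root of `P`. -/
theorem rootMultiplicity_one_eq_rootMultiplicity_q (F : Type*) [Field F]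
    (q s t : F) (hq : q ≠ 0) (P : Polynomial F)
    (hP : P = X ^ 4 + C s * X ^ 3 + C t * X ^ 2 + C (s * q) * X + C (q ^ 2)) :
    P.rootMultiplicity 1 = P.rootMultiplicity q := by
  have hdeg : P.natDegree = 4 := by
    rw [hP]
    compute_degree!
  have hcoeff : P.coeff 0 ≠ 0 := by
    simp [hP, hq, coeff_zero_eq_eval_zero]
  have hrev : P.reverse = 1 + C s * X + C t * X ^ 2 + C (s * q) * X ^ 3 + C (q ^ 2) * X ^ 4 := by
    -- Writing `X` as `X ^ 1` puts every term in the shape `C a * X ^ k` that `reflect` acts on.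
    rw [reverse, hdeg, hP, ← pow_one (X : F[X]), ← pow_mul, ← pow_mul, ← pow_mul]
    simp only [reflect_add, reflect_C_mul_X_pow, reflect_C, reflect_monomial]
    simp [revAt_le]
  -- The functional equation `P(qX) = q² · P.reverse`.
  have hcomp : P.comp (C q * X + C 0) = C (q ^ 2) * P.reverse := by
    rw [hrev, hP]
    simp
    ring
  have h := rootMultiplicity_comp_C_mul_X_add_C P q 0 1 hq.isUnit
  rw [hcomp] at h
  have hC : (C (q ^ 2) * P.reverse).rootMultiplicity 1 = P.reverse.rootMultiplicity 1 := by
    rw [rootMultiplicity_mul]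
    · simp
    · have : P ≠ 0 := by
        rintro rfl
        simp at hcoeff
      simp [hq, this]
  rw [← rootMultiplicity_one_reverse hcoeff, ← hC, h]
  simp
end

section
/- Let R be a commutative ring, let q, c ∈ R, and let A = [[0, −q], [1, c]] ∈ Mat₂(R). For every n ∈ ℕ, writing Aⁿ = [[m₁₁, m₁₂], [m₂₁, m₂₂]], the characteristic polynomial of Aⁿ equals X² − (2m₁₁ + c·m₂₁)X + (m₁₁² + q·m₂₁² + c·m₁₁·m₂₁), and its discriminant satisfies (trace Aⁿ)² − 4·det(Aⁿ) = (c² − 4q)·m₂₁². -/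
/-! Every power of `A = [[0, -q], [1, c]]` lies in `R[A] = R + R A`, that is, it has the form
`a + b A = [[a, -q b], [b, a + c b]]` where `(a, b)` is its first column. Hence its trace is
`2 a + c b` and its determinant is `a ^ 2 + c a b + q b ^ 2`; both claims follow. -/

open Polynomial

/-- A power of the companion block is determined by its first column, since it is an
`R`-linear combination of `1` and the block itself. -/
lemma companion_pow_second_column {R : Type*} [CommRing R] (q c : R) (n : ℕ) :
    ((!![0, -q; 1, c] : Matrix (Fin 2) (Fin 2) R) ^ n) 0 1 =
        -q * ((!![0, -q; 1, c] : Matrix (Fin 2) (Fin 2) R) ^ n) 1 0 ∧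
      ((!![0, -q; 1, c] : Matrix (Fin 2) (Fin 2) R) ^ n) 1 1 =
        ((!![0, -q; 1, c] : Matrix (Fin 2) (Fin 2) R) ^ n) 0 0 +
          c * ((!![0, -q; 1, c] : Matrix (Fin 2) (Fin 2) R) ^ n) 1 0 := by
  induction n with
  | zero => simp
  | succ k ih =>
    obtain ⟨h1, h2⟩ := ih
    simp only [pow_succ, Matrix.mul_apply, Fin.sum_univ_two, h1, h2]
    simp
    constructor <;> ring

/-- For `A = [[0, −q], [1, c]]` over a commutative ring, writing
`Aⁿ = [[m₁₁, m₁₂], [m₂₁, m₂₂]]`, the characteristic polynomial of `Aⁿ` equals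
`X² − (2m₁₁ + c·m₂₁)X + (m₁₁² + q·m₂₁² + c·m₁₁·m₂₁)`, and its discriminant
satisfies `(trace Aⁿ)² − 4·det Aⁿ = (c² − 4q)·m₂₁²`. -/
theorem companion_power_charpoly (R : Type*) [CommRing R] (q c : R)
    (A : Matrix (Fin 2) (Fin 2) R) (hA : A = !![0, -q; 1, c]) (n : ℕ) :
    (A ^ n).charpoly =
      X ^ 2 - C (2 * (A ^ n) 0 0 + c * (A ^ n) 1 0) * X +
        C ((A ^ n) 0 0 ^ 2 + q * (A ^ n) 1 0 ^ 2 + c * (A ^ n) 0 0 * (A ^ n) 1 0) ∧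
    (Matrix.trace (A ^ n)) ^ 2 - 4 * (A ^ n).det = (c ^ 2 - 4 * q) * (A ^ n) 1 0 ^ 2 := by
  obtain ⟨h1, h2⟩ := companion_pow_second_column q c n
  rw [← hA] at h1 h2
  constructor
  -- `Matrix.charpoly_fin_two` needs a nontrivial ring; over the zero ring all is equal.
  · nontriviality R
    rw [Matrix.charpoly_fin_two, Matrix.trace_fin_two, Matrix.det_fin_two, h1, h2]
    simp only [map_add, map_sub, map_mul, map_neg, map_pow, map_ofNat]
    ring
  · rw [Matrix.trace_fin_two, Matrix.det_fin_two, h1, h2]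
    ring
end

section
/- Let ℓ be an odd prime and let q, α ∈ ℤ/ℓℤ be nonzero with α ≠ 1 and α ≠ q. Let M = diag(1, q, α, q·α⁻¹) ∈ Mat₄(ℤ/ℓℤ), and let E ∈ Mat₄(ℤ/ℓℤ) satisfy Eᵀ = −E and MᵀEM = q·E. Then there exist a, b ∈ ℤ/ℓℤ such that E = E_{a,b}, where E_{a,b} denotes the 4×4 matrix with rows (0, a, 0, 0), (−a, 0, 0, 0), (0, 0, 0, b), (0, 0, −b, 0). -/
/-!
Entrywise, `MᵀEM = q • E` with `M = diag(d)` reads `dᵢ Eᵢⱼ dⱼ = q Eᵢⱼ`, so `Eᵢⱼ = 0` unless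
`dᵢ dⱼ = q`. For `d = (1, q, α, q·α⁻¹)` the products at the positions `(1,3)`, `(1,4)`, `(2,3)`,
`(2,4)` differ from `q` because `α ≠ 1` and `α ≠ q`. The diagonal of `E` vanishes by anti-symmetry,
as `2` is invertible modulo `ℓ`, and anti-symmetry also determines the entries below the diagonal.
-/

open Matrix

/-- A pairing matrix scaled by `q` under a diagonal change of basis `d` can only pair the
eigenvectors `i` and `j` nontrivially when their eigenvalues multiply to `q`. -/
lemma apply_eq_zero_of_diagonal_mul_ne {n K : Type*} [Fintype n] [DecidableEq n] [Field K]
    {d : n → K} {q : K} {E : Matrix n n K}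
    (h : (Matrix.diagonal d)ᵀ * E * Matrix.diagonal d = q • E) {i j : n}
    (hij : d i * d j ≠ q) : E i j = 0 := by
  have hE := congrFun (congrFun h i) j
  rw [diagonal_transpose, mul_diagonal, diagonal_mul, Matrix.smul_apply, smul_eq_mul] at hE
  have hmul : (d i * d j - q) * E i j = 0 := by linear_combination hE
  exact (mul_eq_zero.mp hmul).resolve_left (sub_ne_zero.mpr hij)

/-- Theorem 12 (matrix level): over `ℤ/ℓℤ` (`ℓ` an odd prime), let
`M = diag(1, q, α, q·α⁻¹)` with `q, α ≠ 0`, `α ≠ 1` and `α ≠ q`. If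
`E` is anti-symmetric (`Eᵀ = −E`) and satisfies `MᵀEM = q·E`, then `E = E_{a,b}`
for some `a, b`, where `E_{a,b}` has rows `(0, a, 0, 0)`, `(−a, 0, 0, 0)`,
`(0, 0, 0, b)`, `(0, 0, −b, 0)`. -/
theorem antisymmetric_galois_invariant_pairing_form (ℓ : ℕ) [Fact (Nat.Prime ℓ)]
    (hodd : Odd ℓ) (q α : ZMod ℓ) (hq : q ≠ 0) (hα : α ≠ 0) (hα1 : α ≠ 1)
    (hαq : α ≠ q) (M : Matrix (Fin 4) (Fin 4) (ZMod ℓ))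
    (hM : M = Matrix.diagonal ![1, q, α, q * α⁻¹])
    (E : Matrix (Fin 4) (Fin 4) (ZMod ℓ))
    (hanti : Eᵀ = -E) (hgal : Mᵀ * E * M = q • E) :
    ∃ a b : ZMod ℓ,
      E = !![0, a, 0, 0; -a, 0, 0, 0; 0, 0, 0, b; 0, 0, -b, 0] := by
  subst hM
  have h2 : (2 : ZMod ℓ) ≠ 0 := by
    have : Fact (2 < ℓ) := ⟨by
      have := (Fact.out : Nat.Prime ℓ).two_le
      obtain ⟨k, hk⟩ := hodd
      omega⟩
    exact Ring.two_ne_zero (by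
      rw [ZMod.ringChar_zmod_n]
      exact (Fact.out : 2 < ℓ).ne')
  have hskew (i j : Fin 4) : E j i = -E i j := congrFun (congrFun hanti i) j
  have hdiag (i : Fin 4) : E i i = 0 := by
    have h : 2 * E i i = 0 := by linear_combination hskew i i
    exact (mul_eq_zero.mp h).resolve_left h2
  have h02 : E 0 2 = 0 := apply_eq_zero_of_diagonal_mul_ne hgal (by simpa using hαq)
  have h03 : E 0 3 = 0 := apply_eq_zero_of_diagonal_mul_ne hgal (by simp [hq, hα1])
  have h12 : E 1 2 = 0 := apply_eq_zero_of_diagonal_mul_ne hgal (by simp [hq, hα1])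
  have h13 : E 1 3 = 0 := apply_eq_zero_of_diagonal_mul_ne hgal (by
    intro h
    simp only [cons_val] at h
    field_simp at h
    exact hαq h.symm)
  refine ⟨E 0 1, E 2 3, ?_⟩
  ext i j
  fin_cases i <;> fin_cases j <;>
    simp [hdiag, h02, h03, h12, h13, hskew 0 1, hskew 0 2, hskew 0 3, hskew 1 2, hskew 1 3,
      hskew 2 3]
end
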